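/- arXiv:2312.05847 — 11 statements merged into one kernel-verified Lean document; each statement's English description precedes it below -/
import Mathlib

section
/- The rational function H1(x,y) = (x^2 + y^2)/(1 + 2y) is a first integral of the quadratic system S1: for every (x,y) ∈ ℝ^2 with 1 + 2y ≠ 0 one has (−y + x^2 − y^2) · ∂H1/∂x(x,y) + x(1 + 2y) · ∂H1/∂y(x,y) = 0 (in particular both partial derivatives of H1 exist at such points). -/
/-- H1(x,y) = (x²+y²)/(1+2y) is a first integral of
S1(x,y) = (−y + x² − y², x(1+2y)) wherever 1 + 2y ≠ 0:
both partial derivatives exist and the Lie derivative vanishes. -/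
theorem H1_first_integral_of_S1 :
    ∀ x y : ℝ, 1 + 2 * y ≠ 0 →
      ∃ Hx Hy : ℝ,
        HasDerivAt (fun t : ℝ => (t ^ 2 + y ^ 2) / (1 + 2 * y)) Hx x ∧
        HasDerivAt (fun t : ℝ => (x ^ 2 + t ^ 2) / (1 + 2 * t)) Hy y ∧
        (-y + x ^ 2 - y ^ 2) * Hx + x * (1 + 2 * y) * Hy = 0 := by
  intro x y h
  -- With `P = -y + x² - y²`, the partial derivatives are `2x / (1 + 2y)` and `-2P / (1 + 2y)²`,
  -- so the two terms of the Lie derivative are `2xP / (1 + 2y)` and its negative.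
  refine ⟨2 * x / (1 + 2 * y),
    (2 * y * (1 + 2 * y) - (x ^ 2 + y ^ 2) * 2) / (1 + 2 * y) ^ 2, ?_, ?_, ?_⟩
  · simpa using (((hasDerivAt_id x).pow 2).add_const (y ^ 2)).div_const (1 + 2 * y)
  · have hn : HasDerivAt (fun t : ℝ => x ^ 2 + t ^ 2) (2 * y) y := by
      simpa using ((hasDerivAt_id y).pow 2).const_add (x ^ 2)
    have hd : HasDerivAt (fun t : ℝ => 1 + 2 * t) 2 y := by
      simpa using ((hasDerivAt_id y).const_mul 2).const_add 1
    exact hn.div hd h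
  · field_simp
    ring
end

section
/- The rational function H2(x,y) = (x^2 + y^2)/(1 + y)^2 is a first integral of the quadratic system S2: for every (x,y) ∈ ℝ^2 with 1 + y ≠ 0 one has (−y + x^2) · ∂H2/∂x(x,y) + x(1 + y) · ∂H2/∂y(x,y) = 0 (in particular both partial derivatives of H2 exist at such points). -/
/-- H2(x,y) = (x²+y²)/(1+y)² is a first integral of
S2(x,y) = (−y + x², x(1+y)) wherever 1 + y ≠ 0:
both partial derivatives exist and the Lie derivative vanishes. -/
theorem H2_first_integral_of_S2 :
    ∀ x y : ℝ, 1 + y ≠ 0 →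
      ∃ Hx Hy : ℝ,
        HasDerivAt (fun t : ℝ => (t ^ 2 + y ^ 2) / (1 + y) ^ 2) Hx x ∧
        HasDerivAt (fun t : ℝ => (x ^ 2 + t ^ 2) / (1 + t) ^ 2) Hy y ∧
        (-y + x ^ 2) * Hx + x * (1 + y) * Hy = 0 := by
  intro x y h
  -- Here `∂H2/∂y = 2 (y - x²) / (1 + y)³`, so the two terms of the Lie derivative
  -- are `± 2 x (x² - y) / (1 + y)²` and cancel.
  refine ⟨2 * x / (1 + y) ^ 2, 2 * (y - x ^ 2) / (1 + y) ^ 3, ?_, ?_, ?_⟩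
  · refine HasDerivAt.congr_deriv
      (((hasDerivAt_pow 2 x).add_const (y ^ 2)).div_const ((1 + y) ^ 2)) ?_
    norm_num
  · refine HasDerivAt.congr_deriv
      (((hasDerivAt_pow 2 y).const_add (x ^ 2)).div
        (((hasDerivAt_id' y).const_add 1).pow 2) (pow_ne_zero 2 h)) ?_
    field_simp
    norm_num
    ring
  · field_simp
    ring
end

section
/- The rational function H3(x,y) = (9(x^2 + y^2) − 24x^2 y + 16x^4)/(16y − 3) is a first integral of the quadratic system S3: for every (x,y) ∈ ℝ^2 with 16y − 3 ≠ 0 one has (−y − (4/3)x^2) · ∂H3/∂x(x,y) + x(1 − (16/3)y) · ∂H3/∂y(x,y) = 0 (in particular both partial derivatives of H3 exist at such points). -/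
/-!
Write `H3 = N / D` with `N = 9 (x² + y²) - 24 x² y + 16 x⁴` and `D = 16 y - 3`. The curves `N = 0`
and `D = 0` are both invariant under S3, with the same cofactor: the derivative of `N` along S3 is
`-(16/3) x N`, and that of `D` is `-(16/3) x D`. Hence the quotient `N / D` is constant along S3.
-/

/-- H3(x,y) = (9(x²+y²) − 24x²y + 16x⁴)/(16y − 3) is a first integral of
S3(x,y) = (−y − (4/3)x², x(1 − (16/3)y)) wherever 16y − 3 ≠ 0. -/
theorem H3_first_integral_of_S3 :
    ∀ x y : ℝ, 16 * y - 3 ≠ 0 →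
      ∃ Hx Hy : ℝ,
        HasDerivAt (fun t : ℝ =>
          (9 * (t ^ 2 + y ^ 2) - 24 * t ^ 2 * y + 16 * t ^ 4) / (16 * y - 3)) Hx x ∧
        HasDerivAt (fun t : ℝ =>
          (9 * (x ^ 2 + t ^ 2) - 24 * x ^ 2 * t + 16 * x ^ 4) / (16 * t - 3)) Hy y ∧
        (-y - (4 / 3) * x ^ 2) * Hx + x * (1 - (16 / 3) * y) * Hy = 0 := by
  intro x y h
  refine ⟨(18 * x - 48 * x * y + 64 * x ^ 3) / (16 * y - 3),
    ((18 * y - 24 * x ^ 2) * (16 * y - 3)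
      - (9 * (x ^ 2 + y ^ 2) - 24 * x ^ 2 * y + 16 * x ^ 4) * 16) / (16 * y - 3) ^ 2, ?_, ?_, ?_⟩
  · have h2 : HasDerivAt (fun t : ℝ => t ^ 2) (2 * x) x := by
      simpa using hasDerivAt_pow 2 x
    have h4 : HasDerivAt (fun t : ℝ => t ^ 4) (4 * x ^ 3) x := by
      simpa using hasDerivAt_pow 4 x
    refine ((((h2.add_const (y ^ 2)).const_mul 9).sub ((h2.const_mul 24).mul_const y)).add
      (h4.const_mul 16)).div_const (16 * y - 3) |>.congr_deriv ?_
    ring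
  · have h2 : HasDerivAt (fun t : ℝ => t ^ 2) (2 * y) y := by
      simpa using hasDerivAt_pow 2 y
    have hN : HasDerivAt (fun t : ℝ => 9 * (x ^ 2 + t ^ 2) - 24 * x ^ 2 * t + 16 * x ^ 4)
        (18 * y - 24 * x ^ 2) y := by
      refine ((((h2.const_add (x ^ 2)).const_mul 9).sub
        ((hasDerivAt_id' y).const_mul (24 * x ^ 2))).add_const (16 * x ^ 4)).congr_deriv ?_
      ring
    have hD : HasDerivAt (fun t : ℝ => 16 * t - 3) 16 y := by
      simpa using ((hasDerivAt_id' y).const_mul (16 : ℝ)).sub_const 3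
    exact hN.div hD h
  · field_simp
    ring
end

section
/- The rational function H4(x,y) = (9(x^2 + y^2) + 24y^3 + 16y^4)/(3 + 8y)^4 is a first integral of the quadratic system S4: for every (x,y) ∈ ℝ^2 with 3 + 8y ≠ 0 one has (−y + (16/3)x^2 − (4/3)y^2) · ∂H4/∂x(x,y) + x(1 + (8/3)y) · ∂H4/∂y(x,y) = 0 (in particular both partial derivatives of H4 exist at such points). -/
/-!
Writing `D = 3 + 8y`, the quotient rule gives `∂H4/∂x = 18x / D⁴` and, after cancelling `D³`,
`∂H4/∂y = (54y + 72y² - 288x²) / D⁵`. Since `x (1 + (8/3)y) = x D / 3`, the derivative of `H4`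
along the field is `x / D⁴` times
`18(-y + (16/3)x² - (4/3)y²) + (18y + 24y² - 96x²) = 0`.
-/

/-- H4(x,y) = (9(x²+y²) + 24y³ + 16y⁴)/(3+8y)⁴ is a first integral of
S4(x,y) = (−y + (16/3)x² − (4/3)y², x(1 + (8/3)y)) wherever 3 + 8y ≠ 0. -/
theorem H4_first_integral_of_S4 :
    ∀ x y : ℝ, 3 + 8 * y ≠ 0 →
      ∃ Hx Hy : ℝ,
        HasDerivAt (fun t : ℝ =>
          (9 * (t ^ 2 + y ^ 2) + 24 * y ^ 3 + 16 * y ^ 4) / (3 + 8 * y) ^ 4) Hx x ∧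
        HasDerivAt (fun t : ℝ =>
          (9 * (x ^ 2 + t ^ 2) + 24 * t ^ 3 + 16 * t ^ 4) / (3 + 8 * t) ^ 4) Hy y ∧
        (-y + (16 / 3) * x ^ 2 - (4 / 3) * y ^ 2) * Hx + x * (1 + (8 / 3) * y) * Hy = 0 := by
  intro x y h
  refine ⟨18 * x / (3 + 8 * y) ^ 4,
    (54 * y + 72 * y ^ 2 - 288 * x ^ 2) / (3 + 8 * y) ^ 5, ?_, ?_, ?_⟩
  · have hN : HasDerivAt (fun t : ℝ => 9 * (t ^ 2 + y ^ 2) + 24 * y ^ 3 + 16 * y ^ 4)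
        (18 * x) x := by
      have := (((((hasDerivAt_id' x).pow 2).add_const (y ^ 2)).const_mul 9).add_const
        (24 * y ^ 3)).add_const (16 * y ^ 4)
      refine this.congr_deriv ?_
      norm_num
      ring
    exact hN.div_const _
  · have hN : HasDerivAt (fun t : ℝ => 9 * (x ^ 2 + t ^ 2) + 24 * t ^ 3 + 16 * t ^ 4)
        (18 * y + 72 * y ^ 2 + 64 * y ^ 3) y := by
      have := (((((hasDerivAt_id' y).pow 2).const_add (x ^ 2)).const_mul 9).add
        (((hasDerivAt_id' y).pow 3).const_mul 24)).add
        (((hasDerivAt_id' y).pow 4).const_mul 16)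
      refine this.congr_deriv ?_
      norm_num
      ring
    have hD : HasDerivAt (fun t : ℝ => (3 + 8 * t) ^ 4) (32 * (3 + 8 * y) ^ 3) y := by
      have := (((hasDerivAt_id' y).const_mul 8).const_add 3).pow 4
      refine this.congr_deriv ?_
      norm_num
      ring
    refine (hN.div hD (pow_ne_zero 4 h)).congr_deriv ?_
    field_simp
    ring
  · field_simp
    ring
end

section
/- For all v1, v2, λ ∈ ℝ with 1 + 2 v2 λ ≠ 0 and 1 + v2 λ ≠ 0, set σ = −λ/(1 + 2 v2 λ). Then 1 + v2 σ = (1 + v2 λ)/(1 + 2 v2 λ) ≠ 0 and H2(λ v1, λ v2) = H2(σ v1, σ v2). (Thus the half-return point of S2 along any line through the origin coincides with that of S1: σ_1(λ) = σ_2(λ) = −λ/(1 + 2 v2 λ).) -/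
noncomputable def H2 (x y : ℝ) : ℝ := (x ^ 2 + y ^ 2) / (1 + y) ^ 2

/-- The half-return point of S2 along any line through the origin coincides with
that of S1: with σ = −λ/(1 + 2v2λ), one has 1 + v2σ = (1 + v2λ)/(1 + 2v2λ) ≠ 0 and
H2(λv) = H2(σv). -/
theorem H2_half_return :
    ∀ v1 v2 lam : ℝ, 1 + 2 * v2 * lam ≠ 0 → 1 + v2 * lam ≠ 0 →
      1 + v2 * (-lam / (1 + 2 * v2 * lam)) = (1 + v2 * lam) / (1 + 2 * v2 * lam) ∧
      1 + v2 * (-lam / (1 + 2 * v2 * lam)) ≠ 0 ∧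
      H2 (lam * v1) (lam * v2)
        = H2 ((-lam / (1 + 2 * v2 * lam)) * v1) ((-lam / (1 + 2 * v2 * lam)) * v2) := by
  intro v1 v2 lam hd hn
  have key : 1 + v2 * (-lam / (1 + 2 * v2 * lam)) = (1 + v2 * lam) / (1 + 2 * v2 * lam) := by
    rw [eq_div_iff hd, add_mul, mul_assoc v2, div_mul_cancel₀ _ hd]
    ring
  refine ⟨key, by rw [key]; exact div_ne_zero hn hd, ?_⟩
  -- Both the numerator and the denominator of `H2` at `σ v` carry the factor `(1 + 2 v2 λ)⁻²`,
  -- which cancels.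
  rw [H2, H2, mul_comm lam v2, mul_comm (-lam / _) v2, key]
  generalize 1 + 2 * v2 * lam = d at hd
  field_simp
end

section
/- Let v1, v2 ∈ ℝ with (v1, v2) ≠ (0,0), let λ ∈ ℝ with λ ≠ 0 and 1 + 2 v2 λ ≠ 0, and let σ ∈ ℝ with 1 + 2 v2 σ ≠ 0. If H1(λ v1, λ v2) = H1(σ v1, σ v2), then σ = λ or σ = −λ/(1 + 2 v2 λ). (In particular, σ_1(λ) = −λ/(1 + 2 v2 λ) is the unique point with σ ≠ λ on the line through (v1,v2) lying on the same level set of H1 as λ·(v1,v2).) -/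
/-! On the line spanned by `v = (v1, v2)`, equality of the values of `H1` at `lam • v` and `σ • v`
becomes, once the nonzero denominators are cleared,
`|v|² * (σ - lam) * (σ * (1 + 2 * v2 * lam) + lam) = 0`.
Since `|v|² ≠ 0`, one of the two factors linear in `σ` vanishes, and their roots are the two
claimed values. -/

noncomputable def H1 (x y : ℝ) : ℝ := (x ^ 2 + y ^ 2) / (1 + 2 * y)

/-- Uniqueness of the half-return point of S1: if H1(λv) = H1(σv) then
σ = λ or σ = −λ/(1 + 2v2λ). -/
theorem H1_half_return_unique :
    ∀ v1 v2 lam σ : ℝ, (v1, v2) ≠ (0, 0) → lam ≠ 0 →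
      1 + 2 * v2 * lam ≠ 0 → 1 + 2 * v2 * σ ≠ 0 →
      H1 (lam * v1) (lam * v2) = H1 (σ * v1) (σ * v2) →
      σ = lam ∨ σ = -lam / (1 + 2 * v2 * lam) := by
  intro v1 v2 lam σ hv _ hl hs h
  have hn : v1 ^ 2 + v2 ^ 2 ≠ 0 := by
    intro h0
    apply hv
    have h1 : v1 = 0 := by nlinarith [sq_nonneg v1, sq_nonneg v2]
    have h2 : v2 = 0 := by nlinarith [sq_nonneg v1, sq_nonneg v2]
    rw [h1, h2]
  have hl' : 1 + 2 * (lam * v2) ≠ 0 := by convert hl using 1; ring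
  have hs' : 1 + 2 * (σ * v2) ≠ 0 := by convert hs using 1; ring
  unfold H1 at h
  rw [div_eq_div_iff hl' hs'] at h
  have key : (v1 ^ 2 + v2 ^ 2) * ((σ - lam) * (σ * (1 + 2 * v2 * lam) + lam)) = 0 := by
    linear_combination -h
  rcases mul_eq_zero.mp ((mul_eq_zero.mp key).resolve_left hn) with h1 | h1
  · exact Or.inl (sub_eq_zero.mp h1)
  · exact Or.inr ((eq_div_iff hl).mpr (eq_neg_of_add_eq_zero_left h1))
end

section
/- Let v1, v2 ∈ ℝ with (v1, v2) ≠ (0,0), let λ ∈ ℝ with λ ≠ 0, 1 + 2 v2 λ ≠ 0 and 1 + v2 λ ≠ 0, and let σ ∈ ℝ with 1 + v2 σ ≠ 0. If H2(λ v1, λ v2) = H2(σ v1, σ v2), then σ = λ or σ = −λ/(1 + 2 v2 λ). (In particular, σ_2(λ) = −λ/(1 + 2 v2 λ) is the unique point with σ ≠ λ on the line through (v1,v2) lying on the same level set of H2 as λ·(v1,v2).) -/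
/-- Uniqueness of the half-return point of S2: if H2(λv) = H2(σv) then
σ = λ or σ = −λ/(1 + 2v2λ). -/
theorem H2_half_return_unique :
    ∀ v1 v2 lam σ : ℝ, (v1, v2) ≠ (0, 0) → lam ≠ 0 →
      1 + 2 * v2 * lam ≠ 0 → 1 + v2 * lam ≠ 0 → 1 + v2 * σ ≠ 0 →
      H2 (lam * v1) (lam * v2) = H2 (σ * v1) (σ * v2) →
      σ = lam ∨ σ = -lam / (1 + 2 * v2 * lam) := by
  intro v1 v2 lam σ hv _ h2 h1 hs h
  have hN : (v1 ^ 2 + v2 ^ 2) ≠ 0 := by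
    intro h0
    apply hv
    have e1 : v1 = 0 := by nlinarith [sq_nonneg v1, sq_nonneg v2]
    have e2 : v2 = 0 := by nlinarith [sq_nonneg v1, sq_nonneg v2]
    rw [e1, e2]
  have hl : 1 + lam * v2 ≠ 0 := by rwa [mul_comm lam]
  have hr : 1 + σ * v2 ≠ 0 := by rwa [mul_comm σ]
  unfold H2 at h
  rw [div_eq_div_iff (pow_ne_zero 2 hl) (pow_ne_zero 2 hr)] at h
  have hsq : (lam * (1 + σ * v2)) ^ 2 = (σ * (1 + lam * v2)) ^ 2 :=
    mul_left_cancel₀ hN (by linear_combination h)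
  rcases sq_eq_sq_iff_eq_or_eq_neg.mp hsq with e | e
  · left
    linear_combination -e
  · right
    rw [eq_div_iff h2]
    linear_combination e
end

section
/- For all v1, v2 ∈ ℝ with v2 ≠ 0 and every ε > 0 there exists λ ∈ (0, ε) such that 1 + 2 v2 λ ≠ 0, 16 v2 λ − 3 ≠ 0, 16 v2 σ − 3 ≠ 0 where σ = −λ/(1 + 2 v2 λ), and H3(λ v1, λ v2) ≠ H3(σ v1, σ v2). (Thus the half-return map σ_3 of S3 along any non-horizontal line through the origin differs from σ_1(λ) = −λ/(1 + 2 v2 λ): the difference H3(λ v1, λ v2) − H3(σ_1(λ) v1, σ_1(λ) v2) is not identically zero near λ = 0.) -/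
/-!
Write `a = v1 ^ 2`, `b = v2`, `t = b * lam`, `d = 1 + 2 * t`. Cross-multiplying the equation
`H3 (lam * v) = H3 (σ * v)` with `σ = -lam / d` and clearing `d ^ 4` gives
`lam ^ 2 * t * Q lam = 0`, where `Q` is a polynomial with `Q 0 = -(252 * a + 396 * b ^ 2) < 0`.
By continuity `Q`, as well as each of the denominators, is nonzero near `0`, so every small
`lam > 0` separates the two values.
-/

noncomputable def H3 (x y : ℝ) : ℝ :=
  (9 * (x ^ 2 + y ^ 2) - 24 * x ^ 2 * y + 16 * x ^ 4) / (16 * y - 3)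

/-- The cofactor of `lam ^ 2 * (b * lam)` in the cleared difference of the two values of `H3`,
where `a` stands for `v1 ^ 2` and `b` for `v2`. -/
def halfReturnCofactor (a b lam : ℝ) : ℝ :=
  -396 * (a + b ^ 2) * (1 + b * lam) * (1 + 2 * (b * lam)) ^ 2
    + 24 * a * (6 + 30 * (b * lam) + 136 * (b * lam) ^ 2 + 288 * (b * lam) ^ 3
        + 176 * (b * lam) ^ 4)
    - 16 * a ^ 2 * lam ^ 2 * (56 + 168 * (b * lam) + 288 * (b * lam) ^ 2 + 176 * (b * lam) ^ 3)

lemma halfReturnCofactor_eq_zero {v1 v2 lam : ℝ} (hv : v2 ≠ 0) (hl : lam ≠ 0)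
    (hd : 1 + 2 * v2 * lam ≠ 0) (h1 : 16 * v2 * lam - 3 ≠ 0)
    (h2 : 16 * v2 * (-lam / (1 + 2 * v2 * lam)) - 3 ≠ 0)
    (h : H3 (lam * v1) (lam * v2)
      = H3 ((-lam / (1 + 2 * v2 * lam)) * v1) ((-lam / (1 + 2 * v2 * lam)) * v2)) :
    halfReturnCofactor (v1 ^ 2) v2 lam = 0 := by
  obtain ⟨s, hs⟩ : ∃ s, s = -lam / (1 + 2 * v2 * lam) := ⟨_, rfl⟩
  rw [← hs] at h h2
  have h1' : 16 * (lam * v2) - 3 ≠ 0 := by convert h1 using 1; ring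
  have h2' : 16 * (s * v2) - 3 ≠ 0 := by convert h2 using 1; ring
  unfold H3 at h
  rw [div_eq_div_iff h1' h2', hs] at h
  have hz : lam ^ 2 * (v2 * lam) * halfReturnCofactor (v1 ^ 2) v2 lam = 0 := by
    rw [← sub_eq_zero] at h
    have key : lam ^ 2 * (v2 * lam) * halfReturnCofactor (v1 ^ 2) v2 lam
        = (1 + 2 * v2 * lam) ^ 4 * 0 := by
      rw [← h]
      unfold halfReturnCofactor
      -- With the denominator an atom `d`, `field_simp` can cancel it.
      generalize hdd : 1 + 2 * v2 * lam = d at hd ⊢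
      field_simp
      subst hdd
      ring
    simpa using key
  exact (mul_eq_zero.mp hz).resolve_left
    (mul_ne_zero (pow_ne_zero 2 hl) (mul_ne_zero hv hl))

/-- The half-return map of S3 along a non-horizontal line through the origin differs
from σ₁(λ) = −λ/(1 + 2v2λ): arbitrarily close to λ = 0 there are λ > 0 with
H3(λv) ≠ H3(σ₁(λ)v). -/
theorem H3_half_return_differs_from_S1 :
    ∀ v1 v2 : ℝ, v2 ≠ 0 → ∀ ε : ℝ, 0 < ε →
      ∃ lam : ℝ, lam ∈ Set.Ioo (0 : ℝ) ε ∧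
        1 + 2 * v2 * lam ≠ 0 ∧
        16 * v2 * lam - 3 ≠ 0 ∧
        16 * v2 * (-lam / (1 + 2 * v2 * lam)) - 3 ≠ 0 ∧
        H3 (lam * v1) (lam * v2)
          ≠ H3 ((-lam / (1 + 2 * v2 * lam)) * v1) ((-lam / (1 + 2 * v2 * lam)) * v2) := by
  intro v1 v2 hv ε hε
  have e1 : ∀ᶠ lam in nhds (0 : ℝ), 1 + 2 * v2 * lam ≠ 0 :=
    ContinuousAt.eventually_ne (by fun_prop) (by norm_num)
  have e2 : ∀ᶠ lam in nhds (0 : ℝ), 16 * v2 * lam - 3 ≠ 0 :=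
    ContinuousAt.eventually_ne (by fun_prop) (by norm_num)
  have e3 : ∀ᶠ lam in nhds (0 : ℝ), 16 * v2 * (-lam / (1 + 2 * v2 * lam)) - 3 ≠ 0 := by
    refine ContinuousAt.eventually_ne ?_ (by norm_num)
    have h0 : 1 + 2 * v2 * (0 : ℝ) ≠ 0 := by norm_num
    fun_prop (disch := assumption)
  have e4 : ∀ᶠ lam in nhds (0 : ℝ), halfReturnCofactor (v1 ^ 2) v2 lam ≠ 0 := by
    refine ContinuousAt.eventually_ne (by unfold halfReturnCofactor; fun_prop) ?_
    have hb : 0 < v2 ^ 2 := by positivity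
    have ha : 0 ≤ v1 ^ 2 := sq_nonneg v1
    have hneg : halfReturnCofactor (v1 ^ 2) v2 0 < 0 := by
      unfold halfReturnCofactor
      nlinarith
    exact hneg.ne
  have e := (((e1.and e2).and e3).and e4).filter_mono
    (nhdsWithin_le_nhds (s := Set.Ioi (0 : ℝ)))
  obtain ⟨lam, ⟨⟨⟨h1, h2⟩, h3⟩, h4⟩, hmem⟩ := (e.and (Ioo_mem_nhdsGT hε)).exists
  exact ⟨lam, hmem, h1, h2, h3, fun h =>
    h4 (halfReturnCofactor_eq_zero hv hmem.1.ne' h1 h2 h3 h)⟩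
end

section
/- For all v1, v2 ∈ ℝ with v2 ≠ 0 and every ε > 0 there exists λ ∈ (0, ε) such that 1 + 2 v2 λ ≠ 0, 3 + 8 v2 λ ≠ 0, 3 + 8 v2 σ ≠ 0 where σ = −λ/(1 + 2 v2 λ), and H4(λ v1, λ v2) ≠ H4(σ v1, σ v2). (Thus the half-return map σ_4 of S4 along any non-horizontal line through the origin differs from σ_1(λ) = −λ/(1 + 2 v2 λ): the difference H4(λ v1, λ v2) − H4(σ_1(λ) v1, σ_1(λ) v2) is not identically zero near λ = 0.) -/
/-!
Clearing denominators, for `w = 1 + 2 v₂ λ` and `r = v₁² + v₂²`, the equality of the two values of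
`H4` becomes `λ² G(λ) = 0` with `G = (9r + 24v₂³λ + 16v₂⁴λ²)(3 - 2v₂λ)⁴ -
(9r w² - 24v₂³λ w + 16v₂⁴λ²)(3 + 8v₂λ)⁴`. Here `G(0) = 0`, while
`G'(0) = v₂ (3888 v₂² - 12636 (v₁² + v₂²))` is nonzero because `v₂ ≠ 0`. Hence `G` has an isolated
zero at `0`, and every sufficiently small `λ > 0` is a witness.
-/

noncomputable def H4 (x y : ℝ) : ℝ :=
  (9 * (x ^ 2 + y ^ 2) + 24 * y ^ 3 + 16 * y ^ 4) / (3 + 8 * y) ^ 4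

/-- The numerator of `H4(λv) - H4(σ₁(λ)v)`, divided by `λ²`, at `v = (a, b)` and `λ = t`. -/
def gapNumerator (a b t : ℝ) : ℝ :=
  (9 * (a ^ 2 + b ^ 2) + 24 * b ^ 3 * t + 16 * b ^ 4 * t ^ 2) * (3 - 2 * b * t) ^ 4
    - (9 * (a ^ 2 + b ^ 2) * (1 + 2 * b * t) ^ 2 - 24 * b ^ 3 * t * (1 + 2 * b * t)
        + 16 * b ^ 4 * t ^ 2) * (3 + 8 * b * t) ^ 4

lemma hasDerivAt_gapNumerator (a b : ℝ) :
    HasDerivAt (gapNumerator a b) (b * (3888 * b ^ 2 - 12636 * (a ^ 2 + b ^ 2))) 0 := by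
  have hlin (c d : ℝ) : HasDerivAt (fun t : ℝ => c + d * t) d 0 := by
    simpa using ((hasDerivAt_id (0 : ℝ)).const_mul d).const_add c
  have hsq : HasDerivAt (fun t : ℝ => 16 * b ^ 4 * t ^ 2) 0 0 := by
    simpa using (hasDerivAt_pow 2 (0 : ℝ)).const_mul (16 * b ^ 4)
  have h := (((hlin (9 * (a ^ 2 + b ^ 2)) (24 * b ^ 3)).add hsq).mul ((hlin 3 (-2 * b)).pow 4)).sub
    ((((((hlin 1 (2 * b)).pow 2).const_mul (9 * (a ^ 2 + b ^ 2))).sub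
      ((hlin 0 (24 * b ^ 3)).mul (hlin 1 (2 * b)))).add hsq).mul ((hlin 3 (8 * b)).pow 4))
  refine (h.congr_of_eventuallyEq (Filter.Eventually.of_forall fun t => ?_)).congr_deriv ?_
  · simp only [gapNumerator, Pi.add_apply, Pi.sub_apply, Pi.mul_apply, Pi.pow_apply]
    ring
  · simp
    ring

lemma three_add_eight_mul_return {b t : ℝ} (hw : 1 + 2 * b * t ≠ 0) :
    3 + 8 * b * (-t / (1 + 2 * b * t)) = (3 - 2 * b * t) / (1 + 2 * b * t) := by
  rw [eq_div_iff hw]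
  linear_combination 8 * b * div_mul_cancel₀ (-t) hw

lemma gapNumerator_eq_zero_of_eq {a b t : ℝ} (ht : t ≠ 0) (hw : 1 + 2 * b * t ≠ 0)
    (h3 : 3 + 8 * b * t ≠ 0) (hm : 3 - 2 * b * t ≠ 0)
    (h : H4 (t * a) (t * b)
      = H4 ((-t / (1 + 2 * b * t)) * a) ((-t / (1 + 2 * b * t)) * b)) :
    gapNumerator a b t = 0 := by
  have hL : H4 (t * a) (t * b)
      = t ^ 2 * (9 * (a ^ 2 + b ^ 2) + 24 * b ^ 3 * t + 16 * b ^ 4 * t ^ 2)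
        / (3 + 8 * b * t) ^ 4 := by
    unfold H4
    congr 1 <;> ring
  have hR : H4 ((-t / (1 + 2 * b * t)) * a) ((-t / (1 + 2 * b * t)) * b)
      = t ^ 2 * (9 * (a ^ 2 + b ^ 2) * (1 + 2 * b * t) ^ 2 - 24 * b ^ 3 * t * (1 + 2 * b * t)
        + 16 * b ^ 4 * t ^ 2) / (3 - 2 * b * t) ^ 4 := by
    have hd : 3 + 8 * ((-t / (1 + 2 * b * t)) * b) = (3 - 2 * b * t) / (1 + 2 * b * t) := by
      rw [← three_add_eight_mul_return hw]
      ring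
    unfold H4
    rw [hd]
    -- Keeping the two denominators atomic lets `field_simp` clear them without expanding.
    generalize 3 - 2 * b * t = m at hm ⊢
    generalize 1 + 2 * b * t = w at hw ⊢
    field_simp
    ring
  rw [hL, hR, div_eq_div_iff (pow_ne_zero 4 h3) (pow_ne_zero 4 hm)] at h
  refine (mul_eq_zero.mp ?_).resolve_left (pow_ne_zero 2 ht)
  unfold gapNumerator
  linear_combination h

/-- The half-return map of S4 along a non-horizontal line through the origin differs
from σ₁(λ) = −λ/(1 + 2v2λ): arbitrarily close to λ = 0 there are λ > 0 with
H4(λv) ≠ H4(σ₁(λ)v). -/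
theorem H4_half_return_differs_from_S1 :
    ∀ v1 v2 : ℝ, v2 ≠ 0 → ∀ ε : ℝ, 0 < ε →
      ∃ lam : ℝ, lam ∈ Set.Ioo (0 : ℝ) ε ∧
        1 + 2 * v2 * lam ≠ 0 ∧
        3 + 8 * v2 * lam ≠ 0 ∧
        3 + 8 * v2 * (-lam / (1 + 2 * v2 * lam)) ≠ 0 ∧
        H4 (lam * v1) (lam * v2)
          ≠ H4 ((-lam / (1 + 2 * v2 * lam)) * v1) ((-lam / (1 + 2 * v2 * lam)) * v2) := by
  intro a b hb ε hε
  have hderiv : b * (3888 * b ^ 2 - 12636 * (a ^ 2 + b ^ 2)) ≠ 0 := by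
    have hb2 : 0 < b ^ 2 := by positivity
    exact mul_ne_zero hb (by nlinarith [sq_nonneg a])
  have hgap : ∀ᶠ t in nhdsWithin (0 : ℝ) (Set.Ioi 0), gapNumerator a b t ≠ 0 :=
    ((hasDerivAt_gapNumerator a b).eventually_ne hderiv).filter_mono
      (nhdsWithin_mono 0 fun _ ht => ne_of_gt ht)
  have hne (c d : ℝ) (hc : c ≠ 0) :
      ∀ᶠ t in nhdsWithin (0 : ℝ) (Set.Ioi 0), c + d * t ≠ 0 := by
    have hcont : ContinuousAt (fun t : ℝ => c + d * t) 0 := by fun_prop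
    exact (hcont.eventually_ne (by simpa using hc)).filter_mono nhdsWithin_le_nhds
  obtain ⟨t, hg, hw, h3, hm, ht⟩ := (hgap.and ((hne 1 (2 * b) one_ne_zero).and
    ((hne 3 (8 * b) three_ne_zero).and ((hne 3 (-2 * b) three_ne_zero).and
      (Ioo_mem_nhdsGT hε))))).exists
  have hm' : 3 - 2 * b * t ≠ 0 := by
    intro h
    exact hm (by linear_combination h)
  refine ⟨t, ht, hw, h3, ?_, fun h => hg (gapNumerator_eq_zero_of_eq ht.1.ne' hw h3 hm' h)⟩
  rw [three_add_eight_mul_return hw]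
  exact div_ne_zero hm' hw
end

section
/- For all v1, v2 ∈ ℝ with v2 ≠ 0, there do not exist ε with 0 < ε < 1/(16(1 + |v1| + |v2|)) and a function σ : (0, ε) → (−ε, 0) such that for every λ ∈ (0, ε) both H3(λ v1, λ v2) = H3(σ(λ) v1, σ(λ) v2) and H4(λ v1, λ v2) = H4(σ(λ) v1, σ(λ) v2) hold. (That is, along any non-horizontal line through the origin, the half-return maps σ_3 and σ_4 of the centers S3 and S4 do not coincide on any interval (0, ε), so putting S3 in one half-plane and S4 in the other never yields a center.) -/
theorem H3_lt {x y x' y' : ℝ} (hy' : y' < 0) (hy : 0 < y) (hy1 : y < 1 / 16)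
    (hx : x' ^ 2 ≤ x ^ 2) (hyy : y' ^ 2 ≤ y ^ 2) : H3 x y < H3 x' y' := by
  have hd : 0 < 3 - 16 * y := by linarith
  have hd' : 0 < 3 - 16 * y' := by linarith
  have key : ∀ a b : ℝ, 0 < 3 - 16 * b →
      H3 a b = -(9 * b ^ 2 / (3 - 16 * b) + 3 / 2 * a ^ 2 * (1 + 3 / (3 - 16 * b))
        + 16 * (a ^ 2) ^ 2 / (3 - 16 * b)) := by
    intro a b hb
    obtain ⟨d, rfl⟩ : ∃ d, b = (3 - d) / 16 := ⟨3 - 16 * b, by ring⟩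
    rw [show 3 - 16 * ((3 - d) / 16) = d by ring] at hb ⊢
    rw [H3, show 16 * ((3 - d) / 16) - 3 = -d by ring]
    field_simp
    ring
  rw [key x y hd, key x' y' hd', neg_lt_neg_iff]
  have hle : 3 - 16 * y ≤ 3 - 16 * y' := by linarith
  have e1 : 9 * y' ^ 2 / (3 - 16 * y') < 9 * y ^ 2 / (3 - 16 * y) :=
    calc 9 * y' ^ 2 / (3 - 16 * y') ≤ 9 * y ^ 2 / (3 - 16 * y') := by gcongr
      _ < 9 * y ^ 2 / (3 - 16 * y) := by gcongr; linarith
  have e2 : 3 / 2 * x' ^ 2 * (1 + 3 / (3 - 16 * y')) ≤ 3 / 2 * x ^ 2 * (1 + 3 / (3 - 16 * y)) := by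
    gcongr
  have e3 : 16 * (x' ^ 2) ^ 2 / (3 - 16 * y') ≤ 16 * (x ^ 2) ^ 2 / (3 - 16 * y) := by
    gcongr
  linarith

theorem H4_lt {x y x' y' : ℝ} (hy' : y' < 0) (hy : 0 < y) (hy1 : -(1 / 16) < y')
    (hx : x ^ 2 ≤ x' ^ 2) (hyy : y ^ 2 ≤ y' ^ 2) : H4 x y < H4 x' y' := by
  have hd : 0 < 3 + 8 * y := by linarith
  have hd' : 0 < 3 + 8 * y' := by linarith
  have key : ∀ a b : ℝ, 0 < 3 + 8 * b →
      H4 a b = 9 * a ^ 2 / (3 + 8 * b) ^ 4 + (b * (3 + 4 * b) / (3 + 8 * b) ^ 2) ^ 2 := by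
    intro a b hb
    rw [H4]
    field_simp
    ring
  rw [key x y hd, key x' y' hd', ← neg_sq (y' * (3 + 4 * y') / (3 + 8 * y') ^ 2)]
  have hz : y ≤ -y' := by nlinarith
  have e1 : 9 * x ^ 2 / (3 + 8 * y) ^ 4 ≤ 9 * x' ^ 2 / (3 + 8 * y') ^ 4 := by
    gcongr
    linarith
  -- `g(b) = b(3+4b)/(3+8b)² = (1 - 9/(3+8b)²)/16` is increasing, so `g(y) ≤ g(z)` for `z = -y'`,
  -- and `g(z) < -g(-z)` by strict convexity of `w ↦ 1/w²` around `w = 3`.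
  have e2 : y * (3 + 4 * y) / (3 + 8 * y) ^ 2 < -(y' * (3 + 4 * y') / (3 + 8 * y') ^ 2) := by
    obtain ⟨z, rfl⟩ : ∃ z, y' = -z := ⟨-y', by ring⟩
    have hmono : y * (3 + 4 * y) / (3 + 8 * y) ^ 2 ≤ z * (3 + 4 * z) / (3 + 8 * z) ^ 2 := by
      have hzy : y ≤ z := by linarith
      rw [div_le_div_iff₀ (by positivity) (by nlinarith)]
      nlinarith [mul_nonneg (sub_nonneg.2 hzy) (by linarith : 0 ≤ 3 + 4 * (z + y))]
    have hrefl : z * (3 + 4 * z) / (3 + 8 * z) ^ 2 < z * (3 - 4 * z) / (3 - 8 * z) ^ 2 := by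
      have hz0 : 0 < z := by linarith
      have hz1 : 0 < 3 - 8 * z := by linarith
      rw [div_lt_div_iff₀ (by positivity) (by positivity)]
      have : 0 < z ^ 2 * (216 - 512 * z ^ 2) := by
        apply mul_pos (by positivity)
        nlinarith
      nlinarith
    calc _ ≤ _ := hmono
      _ < _ := hrefl
      _ = _ := by ring
  have e3 : 0 ≤ y * (3 + 4 * y) / (3 + 8 * y) ^ 2 := by positivity
  have e4 := pow_lt_pow_left₀ e2 e3 two_ne_zero
  linarith

/-- No two points `(x, y)`, `(x', y')` on opposite rays agree in both first integrals; `r` and `r'`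
are the parameters of the points on the line spanned by `(a, b)`. -/
theorem no_common_return {a b r r' : ℝ} (h0 : r' * b < 0) (h1 : 0 < r * b)
    (h2 : r * b < 1 / 16) (h3 : -(1 / 16) < r' * b)
    (e3 : H3 (r * a) (r * b) = H3 (r' * a) (r' * b))
    (e4 : H4 (r * a) (r * b) = H4 (r' * a) (r' * b)) : False := by
  rcases le_total (r' ^ 2) (r ^ 2) with h | h
  · refine (H3_lt h0 h1 h2 ?_ ?_).ne e3 <;> rw [mul_pow, mul_pow] <;> gcongr
  · refine (H4_lt h0 h1 h3 ?_ ?_).ne e4 <;> rw [mul_pow, mul_pow] <;> gcongr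

/-- Along any non-horizontal line through the origin, the half-return maps of the
centers S3 and S4 do not coincide on any interval (0, ε). -/
theorem halfReturn_S3_S4_differ :
    ∀ v1 v2 : ℝ, v2 ≠ 0 →
      ¬ ∃ (ε : ℝ) (σ : ℝ → ℝ),
          0 < ε ∧ ε < 1 / (16 * (1 + |v1| + |v2|)) ∧
          ∀ lam ∈ Set.Ioo (0 : ℝ) ε,
            σ lam ∈ Set.Ioo (-ε) (0 : ℝ) ∧
            H3 (lam * v1) (lam * v2) = H3 (σ lam * v1) (σ lam * v2) ∧
            H4 (lam * v1) (lam * v2) = H4 (σ lam * v1) (σ lam * v2) := by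
  rintro v1 v2 hv ⟨ε, σ, hε, hε1, h⟩
  obtain ⟨⟨hs1, hs0⟩, e3, e4⟩ := h (ε / 2) ⟨by linarith, by linarith⟩
  have hb : ε * |v2| < 1 / 16 := by
    rw [lt_div_iff₀ (by positivity)] at hε1
    nlinarith [mul_nonneg hε.le (abs_nonneg v1)]
  have bound : ∀ r : ℝ, |r| ≤ ε → |r * v2| < 1 / 16 := fun r hr => by
    rw [abs_mul]
    exact (mul_le_mul_of_nonneg_right hr (abs_nonneg v2)).trans_lt hb
  have b1 := abs_lt.1 (bound (ε / 2) (by rw [abs_of_pos] <;> linarith))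
  have b2 := abs_lt.1 (bound (σ (ε / 2)) (abs_le.2 ⟨hs1.le, by linarith⟩))
  -- The ray in the upper half-plane is the positive one exactly when `v2 > 0`.
  rcases hv.lt_or_gt with hv | hv
  · exact no_common_return (mul_neg_of_pos_of_neg (by linarith) hv) (mul_pos_of_neg_of_neg hs0 hv)
      b2.2 b1.1 e3.symm e4.symm
  · exact no_common_return (mul_neg_of_neg_of_pos hs0 hv) (by positivity) b1.2 b2.1 e3 e4
end

section
/- Let I ⊆ ℝ be an interval and let ρ : I → ℝ be differentiable with ρ(θ) > 0, 1 + ρ(θ) sin θ ≠ 0 and 1 + 2 ρ(θ) sin θ ≠ 0 for all θ ∈ I, and suppose ρ'(θ) = ρ(θ)^2 cos θ / (1 + ρ(θ) sin θ) for all θ ∈ I. Then the function θ ↦ ρ(θ)^2 / (1 + 2 ρ(θ) sin θ) is constant on I. (This is the first integral H1 of S1 expressed along solutions of the radial equation of S1 in polar coordinates.) -/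
/-!
Write `s = sin θ`, `c = cos θ`. The numerator of the derivative of `ρ² / (1 + 2ρs)` is
`2ρρ'(1 + 2ρs) - ρ²(2ρ's + 2ρc) = 2ρ(ρ'(1 + ρs) - ρ²c)`, which vanishes by the radial equation.
An order-connected subset of `ℝ` is convex, so the mean value inequality with bound `0` gives
constancy on it.
-/

open Real

/-- `H1` has zero derivative at any point where the radial equation of `S1` holds. -/
lemma hasDerivAt_H1_radial {ρ : ℝ → ℝ} {θ : ℝ} (h1 : 1 + ρ θ * sin θ ≠ 0)
    (h2 : 1 + 2 * ρ θ * sin θ ≠ 0)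
    (hd : HasDerivAt ρ (ρ θ ^ 2 * cos θ / (1 + ρ θ * sin θ)) θ) :
    HasDerivAt (fun t => ρ t ^ 2 / (1 + 2 * ρ t * sin t)) 0 θ := by
  have hden := ((hd.const_mul 2).mul (hasDerivAt_sin θ)).const_add 1
  refine ((hd.pow 2).div hden h2).congr_deriv ?_
  set r' := ρ θ ^ 2 * cos θ / (1 + ρ θ * sin θ) with hr'
  have hode : r' * (1 + ρ θ * sin θ) = ρ θ ^ 2 * cos θ := div_mul_cancel₀ _ h1
  refine div_eq_zero_iff.mpr (Or.inl ?_)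
  simp only [Pi.mul_apply, Pi.pow_apply]
  push_cast
  linear_combination 2 * ρ θ * hode

/-- Along any solution of the radial equation dr/dθ = r² cosθ/(1 + r sinθ) of S1,
the quantity r²/(1 + 2 r sinθ) (the first integral H1 in polar coordinates)
is constant. -/
theorem H1_constant_along_S1_radial_solutions :
    ∀ (I : Set ℝ), I.OrdConnected →
      ∀ ρ : ℝ → ℝ,
        (∀ θ ∈ I, 0 < ρ θ) →
        (∀ θ ∈ I, 1 + ρ θ * sin θ ≠ 0) →
        (∀ θ ∈ I, 1 + 2 * ρ θ * sin θ ≠ 0) →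
        (∀ θ ∈ I, HasDerivAt ρ (ρ θ ^ 2 * cos θ / (1 + ρ θ * sin θ)) θ) →
        ∀ θ₁ ∈ I, ∀ θ₂ ∈ I,
          ρ θ₁ ^ 2 / (1 + 2 * ρ θ₁ * sin θ₁) = ρ θ₂ ^ 2 / (1 + 2 * ρ θ₂ * sin θ₂) := by
  intro I hI ρ _ h1 h2 hd θ₁ hθ₁ θ₂ hθ₂
  have h := hI.convex.norm_image_sub_le_of_norm_hasDerivWithin_le (C := 0)
    (fun θ hθ => (hasDerivAt_H1_radial (h1 θ hθ) (h2 θ hθ) (hd θ hθ)).hasDerivWithinAt)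
    (fun _ _ => by simp) hθ₂ hθ₁
  rw [zero_mul, norm_le_zero_iff] at h
  exact sub_eq_zero.mp h
end
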